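/- arXiv:2306.12162 — 2 statements merged into one kernel-verified Lean document; each statement's English description precedes it below -/
import Mathlib

section
/- Let d be a graph pseudometric on a set X with edge set E, let xy ∈ [X]² \ E, let r be a real number with ď(x,y) ≤ r ≤ d̂(x,y), and let D = d ∪ {⟨xy,r⟩}. Then for all u, v ∈ X: D̂(u,v) ≤ d̂(u,v) and max{ď(u,v), r − d̈(xy,uv)} ≤ Ď(u,v). -/
open scoped Classical

universe u

namespace GraphMetricPaper

variable {X : Type u}

/-- The vertex set `V = ⋃ E` of a graph given by an adjacency relation `E`. -/
def Vtx (E : X → X → Prop) : Set X := {x | ∃ y, E x y}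

/-- Two points are joined by a walk in the graph `E`. -/
def Joined (E : X → X → Prop) (x y : X) : Prop :=
  ∃ (n : ℕ) (c : ℕ → X), c 0 = x ∧ c n = y ∧ ∀ i, i < n → E (c i) (c (i + 1))

/-- The set of weights of walks from `x` to `y`. -/
def walkSums (E : X → X → Prop) (d : X → X → ℝ) (x y : X) : Set ℝ :=
  {s | ∃ (n : ℕ) (c : ℕ → X), c 0 = x ∧ c n = y ∧ (∀ i, i < n → E (c i) (c (i + 1))) ∧
    s = ∑ i ∈ Finset.range n, d (c i) (c (i + 1))}

/-- The shortest-path pseudometric `d̂` determined by a weight function `d` on a graph `E`. -/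
noncomputable def hatd (E : X → X → Prop) (d : X → X → ℝ) (x y : X) : ℝ :=
  sInf (walkSums E d x y)

/-- The function `ď` bounding the possible extensions of `d` from below:
`ď(x,y) = sup_{ab ∈ E} max {0, d(ab) - d̂(a,x) - d̂(y,b)}`. -/
noncomputable def checkd (E : X → X → Prop) (d : X → X → ℝ) (x y : X) : ℝ :=
  sSup ({0} ∪ {r | ∃ a b, E a b ∧ r = d a b - hatd E d a x - hatd E d y b})

/-- The pseudometric `d̈` on doubletons:
`d̈(xy,uv) = min {d̂(x,u) + d̂(y,v), d̂(x,v) + d̂(y,u)}`. -/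
noncomputable def ddot (E : X → X → Prop) (d : X → X → ℝ) (x y u v : X) : ℝ :=
  min (hatd E d x u + hatd E d y v) (hatd E d x v + hatd E d y u)

/-- `d` is a graph pseudometric with edge relation `E`:  `E` is a (symmetric, irreflexive)
connected graph, `d` is a nonnegative symmetric weight on the edges, and `d = d̂` on edges. -/
structure IsGraphPseudometric (E : X → X → Prop) (d : X → X → ℝ) : Prop where
  symm : ∀ ⦃a b⦄, E a b → E b a
  irrefl : ∀ a, ¬ E a a
  wt_symm : ∀ ⦃a b⦄, E a b → d a b = d b a
  nonneg : ∀ ⦃a b⦄, E a b → 0 ≤ d a b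
  connected : ∀ x ∈ Vtx E, ∀ y ∈ Vtx E, Joined E x y
  edge_eq : ∀ ⦃a b⦄, E a b → d a b = hatd E d a b

/-- A graph metric is a graph pseudometric with strictly positive weights. -/
def IsGraphMetric (E : X → X → Prop) (d : X → X → ℝ) : Prop :=
  IsGraphPseudometric E d ∧ ∀ ⦃a b⦄, E a b → 0 < d a b

/-- A floppy graph pseudometric: `ď(x,y) < d̂(x,y)` for every `xy ∈ [V]² \ E`. -/
def FloppyPseudometric (E : X → X → Prop) (d : X → X → ℝ) : Prop :=
  IsGraphPseudometric E d ∧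
    ∀ x ∈ Vtx E, ∀ y ∈ Vtx E, x ≠ y → ¬ E x y → checkd E d x y < hatd E d x y

/-- A floppy graph metric: `ď(x,y) < d̂(x,y)` for every `xy ∈ [V]² \ E`. -/
def FloppyMetric (E : X → X → Prop) (d : X → X → ℝ) : Prop :=
  IsGraphMetric E d ∧
    ∀ x ∈ Vtx E, ∀ y ∈ Vtx E, x ≠ y → ¬ E x y → checkd E d x y < hatd E d x y

/-- The edge relation of the one-step extension `E ∪ {xy}`. -/
def extEdge (E : X → X → Prop) (x y : X) : X → X → Prop :=
  fun a b => E a b ∨ (a = x ∧ b = y) ∨ (a = y ∧ b = x)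

/-- The weight function of the one-step extension `d ∪ {⟨xy, r⟩}`. -/
noncomputable def extWt (d : X → X → ℝ) (x y : X) (r : ℝ) : X → X → ℝ :=
  fun a b => if (a = x ∧ b = y) ∨ (a = y ∧ b = x) then r else d a b

/-- The set `[V]² \ E` of unordered pairs of distinct vertices that are not edges. -/
def nonEdgePairs (E : X → X → Prop) : Set (Sym2 X) :=
  {e | ∃ a b : X, e = s(a, b) ∧ a ≠ b ∧ a ∈ Vtx E ∧ b ∈ Vtx E ∧ ¬ E a b}

/-- A set of (unordered) weighted pairs, presented as a relation `R`, is a full metric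
on `V`: it is symmetric, its domain is exactly `[V]²`, it is single-valued, positive,
and satisfies the triangle inequality. -/
def IsFullMetricRel (V : Set X) (R : X → X → ℝ → Prop) : Prop :=
  (∀ a b r, R a b r → R b a r) ∧
  (∀ a b r, R a b r → a ∈ V ∧ b ∈ V ∧ a ≠ b) ∧
  (∀ a b, a ∈ V → b ∈ V → a ≠ b → ∃ r, R a b r) ∧
  (∀ a b r s, R a b r → R a b s → r = s) ∧
  (∀ a b r, R a b r → 0 < r) ∧
  (∀ a b c r s t, R a b r → R b c s → R a c t → t ≤ r + s)

/-- A weight function `D` on `[V]²` is a full metric on `V`. -/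
def IsFullMetricOn (V : Set X) (D : X → X → ℝ) : Prop :=
  (∀ a b, a ∈ V → b ∈ V → a ≠ b → D a b = D b a) ∧
  (∀ a b, a ∈ V → b ∈ V → a ≠ b → 0 < D a b) ∧
  (∀ a b c, a ∈ V → b ∈ V → c ∈ V → a ≠ b → b ≠ c → a ≠ c → D a c ≤ D a b + D b c)

/-- Player I has a winning strategy in the metric-extending game `Game_d(lam, Fam)`:
there are functions `S1, S2` choosing, for each inning `β < lam` and each sequence of
previous answers of player II, a legal doubleton in `[V]²` and a set from `Fam`, such that
for every play of player II respecting the strategy, the resulting relation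
`d ∪ {⟨x_α y_α, r_α⟩ : α < lam}` is a full metric on `V`. -/
def WinningStratI (V : Set X) (E : X → X → Prop) (d : X → X → ℝ)
    (lam : Ordinal.{u}) (Fam : Set (Set ℝ)) : Prop :=
  ∃ (S1 : ∀ β : Ordinal.{u}, β < lam → (∀ α : Ordinal.{u}, α < β → ℝ) → X × X)
    (S2 : ∀ β : Ordinal.{u}, β < lam → (∀ α : Ordinal.{u}, α < β → ℝ) → Set ℝ),
    (∀ β hβ s, S2 β hβ s ∈ Fam) ∧
    (∀ β hβ s, (S1 β hβ s).1 ∈ V ∧ (S1 β hβ s).2 ∈ V ∧ (S1 β hβ s).1 ≠ (S1 β hβ s).2) ∧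
    (∀ s : ∀ α : Ordinal.{u}, α < lam → ℝ,
      (∀ α (hα : α < lam), s α hα ∈ S2 α hα (fun γ hγ => s γ (hγ.trans hα))) →
      IsFullMetricRel V (fun a b r =>
        (E a b ∧ r = d a b) ∨
        ∃ α, ∃ hα : α < lam,
          ((a = (S1 α hα (fun γ hγ => s γ (hγ.trans hα))).1 ∧
            b = (S1 α hα (fun γ hγ => s γ (hγ.trans hα))).2) ∨
           (a = (S1 α hα (fun γ hγ => s γ (hγ.trans hα))).2 ∧
            b = (S1 α hα (fun γ hγ => s γ (hγ.trans hα))).1)) ∧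
          r = s α hα))

/-- Player II has a winning strategy in the metric-extending game `Game_d(lam, Fam)`:
there is a function `T` assigning to each inning `β < lam` and each sequence of moves of
player I (of length `β + 1`) an answer in the set component of the last move, such that
for every legal play of player I, the resulting relation is not a full metric on `V`. -/
def WinningStratII (V : Set X) (E : X → X → Prop) (d : X → X → ℝ)
    (lam : Ordinal.{u}) (Fam : Set (Set ℝ)) : Prop :=
  ∃ T : ∀ β : Ordinal.{u}, β < lam → (∀ α : Ordinal.{u}, α ≤ β → (X × X) × Set ℝ) → ℝ,
    (∀ β hβ p, (p β le_rfl).2 ∈ Fam → T β hβ p ∈ (p β le_rfl).2) ∧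
    (∀ p : ∀ α : Ordinal.{u}, α < lam → (X × X) × Set ℝ,
      (∀ α hα, (p α hα).1.1 ∈ V ∧ (p α hα).1.2 ∈ V ∧ (p α hα).1.1 ≠ (p α hα).1.2 ∧
        (p α hα).2 ∈ Fam) →
      ¬ IsFullMetricRel V (fun a b r =>
        (E a b ∧ r = d a b) ∨
        ∃ α, ∃ hα : α < lam,
          ((a = (p α hα).1.1 ∧ b = (p α hα).1.2) ∨
           (a = (p α hα).1.2 ∧ b = (p α hα).1.1)) ∧
          r = T α hα (fun γ hγ => p γ (lt_of_le_of_lt hγ hα))))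

/-- The edge relation of the glued graph `E_d = E_p ∪ ⋃_{f ∈ F} E_f`. -/
def gluedEdge (Ep : X → X → Prop) (F : Set ((X → X → Prop) × (X → X → ℝ))) :
    X → X → Prop :=
  fun a b => Ep a b ∨ ∃ f ∈ F, f.1 a b

/-- `Λ(v; B) = inf {d̂(a,v) + d̂(v,b) - d̂(a,b) : a, b ∈ B}`. -/
noncomputable def Lam (E : X → X → Prop) (d : X → X → ℝ) (v : X) (B : Set X) : ℝ :=
  sInf {r | ∃ a ∈ B, ∃ b ∈ B, r = hatd E d a v + hatd E d v b - hatd E d a b}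

/-- The gluing setup: a graph pseudometric `p = (Ep, wp)` and a family `F` of graph
pseudometrics such that each member meets `V_p`, agrees with `p̂` on the intersection of
the vertex sets, and distinct members only meet inside `V_p`; `wd` is the glued weight
function `d = p ∪ ⋃ F` on `E_d = E_p ∪ ⋃_{f ∈ F} E_f`. -/
structure GluingSetup (Ep : X → X → Prop) (wp : X → X → ℝ)
    (F : Set ((X → X → Prop) × (X → X → ℝ))) (wd : X → X → ℝ) : Prop where
  hp : IsGraphPseudometric Ep wp
  hF : ∀ f ∈ F, IsGraphPseudometric f.1 f.2
  meet : ∀ f ∈ F, (Vtx f.1 ∩ Vtx Ep).Nonempty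
  agree : ∀ f ∈ F, ∀ x ∈ Vtx f.1 ∩ Vtx Ep, ∀ y ∈ Vtx f.1 ∩ Vtx Ep, x ≠ y →
    hatd f.1 f.2 x y = hatd Ep wp x y
  inter_sub : ∀ f ∈ F, ∀ g ∈ F, f ≠ g → Vtx f.1 ∩ Vtx g.1 ⊆ Vtx Ep
  wd_p : ∀ ⦃a b⦄, Ep a b → wd a b = wp a b
  wd_F : ∀ f ∈ F, ∀ ⦃a b⦄, f.1 a b → wd a b = f.2 a b

lemma Joined.walkSums_nonempty {E : X → X → Prop} {d : X → X → ℝ} {a b : X}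
    (h : Joined E a b) : (walkSums E d a b).Nonempty := by
  obtain ⟨n, c, h0, hn, hc⟩ := h
  exact ⟨_, n, c, h0, hn, hc, rfl⟩

lemma walkSums_bddBelow {E : X → X → Prop} {d : X → X → ℝ}
    (hd : ∀ a b, E a b → 0 ≤ d a b) (a b : X) : BddBelow (walkSums E d a b) := by
  refine ⟨0, ?_⟩
  rintro s ⟨n, c, -, -, hc, rfl⟩
  exact Finset.sum_nonneg fun i hi => hd _ _ (hc i (Finset.mem_range.1 hi))

/-- A function that decreases along each edge by at most the weight of the edge decreases
by at most `d̂`. -/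
lemma sub_le_hatd {E : X → X → Prop} {d : X → X → ℝ} {f : X → ℝ} {a b : X}
    (h : Joined E a b) (hf : ∀ s t, E s t → f s - f t ≤ d s t) :
    f a - f b ≤ hatd E d a b := by
  refine le_csInf h.walkSums_nonempty ?_
  rintro s ⟨n, c, rfl, rfl, hc, rfl⟩
  rw [← Finset.sum_range_sub' (fun i => f (c i))]
  exact Finset.sum_le_sum fun i hi => hf _ _ (hc i (Finset.mem_range.1 hi))

lemma hatd_nonneg {E : X → X → Prop} {d : X → X → ℝ}
    (hd : ∀ a b, E a b → 0 ≤ d a b) (a b : X) : 0 ≤ hatd E d a b := by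
  apply Real.sInf_nonneg
  rintro s ⟨n, c, -, -, hc, rfl⟩
  exact Finset.sum_nonneg fun i hi => hd _ _ (hc i (Finset.mem_range.1 hi))

lemma hatd_self {E : X → X → Prop} {d : X → X → ℝ}
    (hd : ∀ a b, E a b → 0 ≤ d a b) (a : X) : hatd E d a a = 0 :=
  le_antisymm (csInf_le (walkSums_bddBelow hd a a) ⟨0, fun _ => a, by simp⟩)
    (hatd_nonneg hd a a)

lemma hatd_le_add_of_edge {E : X → X → Prop} {d : X → X → ℝ} {a b c : X}
    (hd : ∀ a b, E a b → 0 ≤ d a b) (hab : E a b) (hbc : Joined E b c) :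
    hatd E d a c ≤ d a b + hatd E d b c := by
  rw [← sub_le_iff_le_add']
  refine le_csInf hbc.walkSums_nonempty ?_
  rintro s ⟨n, w, h0, hn, hw, rfl⟩
  rw [sub_le_iff_le_add']
  refine csInf_le (walkSums_bddBelow hd a c)
    ⟨n + 1, fun i => Nat.casesOn i a w, rfl, hn, ?_, ?_⟩
  · rintro (_ | i) hi
    · simpa [h0] using hab
    · exact hw i (by omega)
  · rw [Finset.sum_range_succ', add_comm]
    simp [h0]

lemma hatd_triangle {E : X → X → Prop} {d : X → X → ℝ}
    (hd : ∀ a b, E a b → 0 ≤ d a b) (hJ : ∀ a b, Joined E a b) (a b c : X) :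
    hatd E d a c ≤ hatd E d a b + hatd E d b c := by
  have := sub_le_hatd (f := fun z => hatd E d z c) (hJ a b) fun s t hst =>
    sub_le_iff_le_add.2 (hatd_le_add_of_edge hd hst (hJ t c))
  linarith

lemma IsGraphPseudometric.hatd_comm {E : X → X → Prop} {d : X → X → ℝ}
    (hd : IsGraphPseudometric E d) (hJ : ∀ a b, Joined E a b) (a b : X) :
    hatd E d a b = hatd E d b a := by
  have key : ∀ a b, hatd E d b a ≤ hatd E d a b := by
    intro a b
    have := sub_le_hatd (E := E) (d := d) (f := fun z => -hatd E d z a) (hJ a b) <| by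
      intro s t hst
      have h := hatd_le_add_of_edge hd.nonneg (hd.symm hst) (hJ s a)
      rw [← hd.wt_symm hst] at h
      linarith
    have h0 := hatd_self hd.nonneg a
    simp only [h0] at this
    linarith
  exact le_antisymm (key b a) (key a b)

lemma checkd_nonneg (E : X → X → Prop) (d : X → X → ℝ) (x y : X) : 0 ≤ checkd E d x y :=
  Real.sSup_nonneg' ⟨0, by simp, le_rfl⟩

lemma extWt_of_edge {E : X → X → Prop} {d : X → X → ℝ} (hE : ∀ ⦃a b⦄, E a b → E b a)
    {x y : X} (hnE : ¬ E x y) (r : ℝ) {a b : X} (hab : E a b) :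
    extWt d x y r a b = d a b := by
  refine if_neg ?_
  rintro (⟨rfl, rfl⟩ | ⟨rfl, rfl⟩)
  · exact hnE hab
  · exact hnE (hE hab)

lemma extWt_nonneg {E : X → X → Prop} {d : X → X → ℝ} (hd : ∀ ⦃a b⦄, E a b → 0 ≤ d a b)
    {x y : X} {r : ℝ} (hr : 0 ≤ r) (a b : X) (hab : extEdge E x y a b) :
    0 ≤ extWt d x y r a b := by
  unfold extWt
  split_ifs with h
  · exact hr
  · exact hd (hab.resolve_right h)

lemma Joined.extEdge {E : X → X → Prop} {a b : X} (h : Joined E a b) (x y : X) :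
    Joined (extEdge E x y) a b := by
  obtain ⟨n, c, h0, hn, hc⟩ := h
  exact ⟨n, c, h0, hn, fun i hi => Or.inl (hc i hi)⟩

lemma hatd_extEdge_le {E : X → X → Prop} {d : X → X → ℝ} (hd : IsGraphPseudometric E d)
    {x y : X} (hnE : ¬ E x y) {r : ℝ} (hr : 0 ≤ r) {u v : X} (huv : Joined E u v) :
    hatd (extEdge E x y) (extWt d x y r) u v ≤ hatd E d u v := by
  refine csInf_le_csInf (walkSums_bddBelow (extWt_nonneg hd.nonneg hr) u v)
    huv.walkSums_nonempty ?_
  rintro s ⟨n, c, h0, hn, hc, rfl⟩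
  exact ⟨n, c, h0, hn, fun i hi => Or.inl (hc i hi), Finset.sum_congr rfl fun i hi =>
    (extWt_of_edge hd.symm hnE r (hc i (Finset.mem_range.1 hi))).symm⟩

/-- Adding an edge `xy` of nonnegative weight decreases the distances to a vertex `u` by at
most `d̂(x,u) + d̂(y,u)`, in either direction. -/
lemma hatd_le_hatd_extEdge_add {E : X → X → Prop} {d : X → X → ℝ}
    (hd : IsGraphPseudometric E d) (hJ : ∀ a b, Joined E a b)
    {x y : X} (hnE : ¬ E x y) {r : ℝ} (hr : 0 ≤ r) (a u : X) :
    hatd E d a u ≤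
        hatd (extEdge E x y) (extWt d x y r) a u + (hatd E d x u + hatd E d y u) ∧
      hatd E d a u ≤
        hatd (extEdge E x y) (extWt d x y r) u a + (hatd E d x u + hatd E d y u) := by
  set K := hatd E d x u + hatd E d y u with hK
  have hx := hatd_nonneg hd.nonneg x u
  have hy := hatd_nonneg hd.nonneg y u
  set f : X → ℝ := fun z => max 0 (hatd E d z u - K) with hf
  have fx : f x = 0 := max_eq_left (by linarith)
  have fy : f y = 0 := max_eq_left (by linarith)
  have fu : f u = 0 := max_eq_left (by rw [hatd_self hd.nonneg]; linarith)
  have fa : hatd E d a u - K ≤ f a := le_max_right _ _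
  have hlip : ∀ s t, extEdge E x y s t → f s - f t ≤ extWt d x y r s t := by
    rintro s t (hst | ⟨rfl, rfl⟩ | ⟨rfl, rfl⟩)
    · rw [extWt_of_edge hd.symm hnE r hst, sub_le_iff_le_add]
      have h := hatd_le_add_of_edge hd.nonneg hst (hJ t u)
      have h0 := hd.nonneg hst
      have h1 : 0 ≤ f t := le_max_left _ _
      have h2 : hatd E d t u - K ≤ f t := le_max_right _ _
      exact max_le (by linarith) (by linarith)
    all_goals simpa [fx, fy, extWt] using hr
  have hsymm : ∀ s t, extEdge E x y s t → -f s - -f t ≤ extWt d x y r s t := by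
    rintro s t (hst | ⟨rfl, rfl⟩ | ⟨rfl, rfl⟩)
    · have h := hlip t s (Or.inl (hd.symm hst))
      rw [extWt_of_edge hd.symm hnE r (hd.symm hst)] at h
      rw [extWt_of_edge hd.symm hnE r hst, hd.wt_symm hst]
      linarith
    all_goals simpa [fx, fy, extWt] using hr
  have h1 := sub_le_hatd ((hJ a u).extEdge x y) hlip
  have h2 := sub_le_hatd (f := fun z => -f z) ((hJ u a).extEdge x y) hsymm
  constructor <;> linarith

lemma checkd_extEdge_bddAbove {E : X → X → Prop} {d : X → X → ℝ}
    (hd : IsGraphPseudometric E d) (hJ : ∀ a b, Joined E a b)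
    {x y : X} (hnE : ¬ E x y) {r : ℝ} (hr : 0 ≤ r) (u v : X) :
    BddAbove ({0} ∪ {s | ∃ a b, extEdge E x y a b ∧ s = extWt d x y r a b -
      hatd (extEdge E x y) (extWt d x y r) a u -
      hatd (extEdge E x y) (extWt d x y r) v b}) := by
  have hn := hatd_nonneg hd.nonneg
  have hnD := hatd_nonneg (extWt_nonneg (x := x) (y := y) hd.nonneg hr)
  refine ⟨r + hatd E d u v + (hatd E d x u + hatd E d y u) +
    (hatd E d x v + hatd E d y v), ?_⟩
  have h1 := hn u v
  have h2 := hn x u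
  have h3 := hn y u
  have h4 := hn x v
  have h5 := hn y v
  rintro s (rfl | ⟨a, b, hab, rfl⟩)
  · linarith
  · have h6 := hnD a u
    have h7 := hnD v b
    rcases hab with hab | hab
    · rw [extWt_of_edge hd.symm hnE r hab, hd.edge_eq hab]
      have h8 := hatd_triangle hd.nonneg hJ a u b
      have h9 := hatd_triangle hd.nonneg hJ u v b
      have h10 := (hatd_le_hatd_extEdge_add hd hJ hnE hr a u).1
      have h11 := (hatd_le_hatd_extEdge_add hd hJ hnE hr b v).2
      rw [hd.hatd_comm hJ b v] at h11
      linarith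
    · rw [extWt, if_pos hab]
      linarith

/-- With `D = d ∪ {⟨xy, r⟩}` for `ď(x,y) ≤ r ≤ d̂(x,y)`:
`D̂(u,v) ≤ d̂(u,v)` and `max {ď(u,v), r − d̈(xy,uv)} ≤ Ď(u,v)` for all `u, v ∈ X`. -/
theorem one_step_extension_estimates₁ (E : X → X → Prop) (d : X → X → ℝ)
    (hd : IsGraphPseudometric E d) (hvert : ∀ z : X, z ∈ Vtx E)
    (x y : X) (hxy : x ≠ y) (hnE : ¬ E x y) (r : ℝ)
    (hr₁ : checkd E d x y ≤ r) (hr₂ : r ≤ hatd E d x y) :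
    ∀ u v : X,
      hatd (extEdge E x y) (extWt d x y r) u v ≤ hatd E d u v ∧
      max (checkd E d u v) (r - ddot E d x y u v) ≤
        checkd (extEdge E x y) (extWt d x y r) u v := by
  have hJ : ∀ a b, Joined E a b := fun a b => hd.connected a (hvert a) b (hvert b)
  have hr : 0 ≤ r := (checkd_nonneg E d x y).trans hr₁
  have hle : ∀ a b, hatd (extEdge E x y) (extWt d x y r) a b ≤ hatd E d a b :=
    fun a b => hatd_extEdge_le hd hnE hr (hJ a b)
  intro u v
  have hedge : ∀ a b, extEdge E x y a b →
      extWt d x y r a b - hatd E d a u - hatd E d v b ≤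
        checkd (extEdge E x y) (extWt d x y r) u v := by
    intro a b hab
    refine le_trans ?_ (le_csSup (checkd_extEdge_bddAbove hd hJ hnE hr u v)
      (Or.inr ⟨a, b, hab, rfl⟩))
    linarith [hle a u, hle v b]
  refine ⟨hle u v, max_le ?_ ?_⟩
  · refine csSup_le ⟨0, by simp⟩ ?_
    rintro s (rfl | ⟨a, b, hab, rfl⟩)
    · exact checkd_nonneg _ _ u v
    · rw [← extWt_of_edge (d := d) hd.symm hnE r hab]
      exact hedge a b (Or.inl hab)
  · have h1 := hedge x y (Or.inr (Or.inl ⟨rfl, rfl⟩))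
    have h2 := hedge y x (Or.inr (Or.inr ⟨rfl, rfl⟩))
    rw [extWt, if_pos (by simp), hd.hatd_comm hJ v] at h1 h2
    rw [ddot, sub_le_comm, le_min_iff]
    constructor <;> linarith

end GraphMetricPaper
end

section
/- Let d be a graph pseudometric on a set X with edge set E, let xy ∈ [X]² \ E, let r be a real number with ď(x,y) ≤ r ≤ d̂(x,y), and let D = d ∪ {⟨xy,r⟩}. Then for all u, v ∈ X with d̂(u,v) ≠ D̂(u,v), we have D̂(u,v) − ď(u,v) ≥ r − ď(x,y). -/
open scoped Classical

universe u

namespace GraphMetricPaper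

variable {X : Type u}

/-- A function that decreases by at most the edge weight along each edge decreases by at most
the weight of a walk along that walk. -/
theorem le_add_of_mem_walkSums {E : X → X → Prop} {d : X → X → ℝ} {f : X → ℝ}
    (hf : ∀ a b, E a b → f a ≤ d a b + f b) {u v : X} {s : ℝ} (hs : s ∈ walkSums E d u v) :
    f u ≤ s + f v := by
  obtain ⟨n, c, rfl, rfl, hc, rfl⟩ := hs
  induction n with
  | zero => simp
  | succ n ih =>
    have h₁ := ih fun i hi => hc i (by omega)
    have h₂ := hf _ _ (hc n (by omega))
    rw [Finset.sum_range_succ]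
    linarith

theorem walkSums_nonneg {E : X → X → Prop} {d : X → X → ℝ} (hd : ∀ a b, E a b → 0 ≤ d a b)
    {u v : X} {s : ℝ} (hs : s ∈ walkSums E d u v) : 0 ≤ s := by
  have := le_add_of_mem_walkSums (f := fun _ => 0) (fun a b h => by simpa using hd a b h) hs
  simpa using this

theorem hatd_le_of_mem {E : X → X → Prop} {d : X → X → ℝ} (hd : ∀ a b, E a b → 0 ≤ d a b)
    {u v : X} {s : ℝ} (hs : s ∈ walkSums E d u v) : hatd E d u v ≤ s :=
  csInf_le ⟨0, fun _ ht => walkSums_nonneg hd ht⟩ hs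

theorem zero_mem_walkSums (E : X → X → Prop) (d : X → X → ℝ) (u : X) : 0 ∈ walkSums E d u u :=
  ⟨0, fun _ => u, rfl, rfl, by simp, by simp⟩

theorem add_mem_walkSums {E : X → X → Prop} {d : X → X → ℝ} {a b v : X} {s : ℝ} (hab : E a b)
    (hs : s ∈ walkSums E d b v) : d a b + s ∈ walkSums E d a v := by
  obtain ⟨n, c, rfl, rfl, hc, rfl⟩ := hs
  refine ⟨n + 1, fun i => Nat.casesOn i a c, rfl, rfl, ?_, ?_⟩
  · rintro (_ | i) hi
    · exact hab
    · exact hc i (by omega)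
  · rw [Finset.sum_range_succ', add_comm]
    rfl

theorem walkSums_extEdge_of_mem {E : X → X → Prop} {d : X → X → ℝ} {x y u v : X} {r s : ℝ}
    (hxy : ¬ E x y) (hyx : ¬ E y x) (hs : s ∈ walkSums E d u v) :
    s ∈ walkSums (extEdge E x y) (extWt d x y r) u v := by
  obtain ⟨n, c, rfl, rfl, hc, rfl⟩ := hs
  refine ⟨n, c, rfl, rfl, fun i hi => Or.inl (hc i hi), Finset.sum_congr rfl fun i hi => ?_⟩
  have h := hc i (Finset.mem_range.mp hi)
  rw [extWt, if_neg]
  rintro (⟨h₁, h₂⟩ | ⟨h₁, h₂⟩) <;> rw [h₁, h₂] at h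
  exacts [hxy h, hyx h]

namespace IsGraphPseudometric

variable {E : X → X → Prop} {d : X → X → ℝ}

theorem walkSums_nonempty (hd : IsGraphPseudometric E d) (hvert : ∀ z, z ∈ Vtx E) (u v : X) :
    (walkSums E d u v).Nonempty := by
  obtain ⟨n, c, h₀, hn, hc⟩ := hd.connected u (hvert u) v (hvert v)
  exact ⟨_, n, c, h₀, hn, hc, rfl⟩

theorem hatd_nonneg (hd : IsGraphPseudometric E d) (u v : X) : 0 ≤ hatd E d u v :=
  Real.sInf_nonneg fun _ hs => walkSums_nonneg hd.nonneg hs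

theorem hatd_self (hd : IsGraphPseudometric E d) (u : X) : hatd E d u u = 0 :=
  (hatd_le_of_mem hd.nonneg (zero_mem_walkSums E d u)).antisymm (hd.hatd_nonneg u u)

theorem hatd_le_edge_add (hd : IsGraphPseudometric E d) (hvert : ∀ z, z ∈ Vtx E) {a b : X}
    (hab : E a b) (v : X) : hatd E d a v ≤ d a b + hatd E d b v := by
  rw [← sub_le_iff_le_add']
  refine le_csInf (hd.walkSums_nonempty hvert b v) fun s hs => ?_
  rw [sub_le_iff_le_add']
  exact hatd_le_of_mem hd.nonneg (add_mem_walkSums hab hs)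

theorem hatd_triangle (hd : IsGraphPseudometric E d) (hvert : ∀ z, z ∈ Vtx E) (u w v : X) :
    hatd E d u v ≤ hatd E d u w + hatd E d w v := by
  rw [← sub_le_iff_le_add]
  refine le_csInf (hd.walkSums_nonempty hvert u w) fun s hs => ?_
  rw [sub_le_iff_le_add]
  exact le_add_of_mem_walkSums (f := fun z => hatd E d z v)
    (fun a b hab => hd.hatd_le_edge_add hvert hab v) hs

theorem hatd_comm_le (hd : IsGraphPseudometric E d) (hvert : ∀ z, z ∈ Vtx E) (u v : X) :
    hatd E d v u ≤ hatd E d u v := by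
  refine le_csInf (hd.walkSums_nonempty hvert u v) fun s hs => ?_
  have := le_add_of_mem_walkSums (f := hatd E d v) (fun a b hab => by
    have h := hd.hatd_triangle hvert v b a
    rw [← hd.edge_eq (hd.symm hab), ← hd.wt_symm hab] at h
    linarith) hs
  simpa [hd.hatd_self] using this

theorem hatd_comm_s9 (hd : IsGraphPseudometric E d) (hvert : ∀ z, z ∈ Vtx E) (u v : X) :
    hatd E d u v = hatd E d v u :=
  (hd.hatd_comm_le hvert v u).antisymm (hd.hatd_comm_le hvert u v)

theorem bddAbove_checkd (hd : IsGraphPseudometric E d) (hvert : ∀ z, z ∈ Vtx E) (x y : X) :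
    BddAbove ({0} ∪ {r | ∃ a b, E a b ∧ r = d a b - hatd E d a x - hatd E d y b}) := by
  refine ⟨hatd E d x y, ?_⟩
  rintro s (rfl | ⟨a, b, hab, rfl⟩)
  · exact hd.hatd_nonneg x y
  · have h₁ := hd.hatd_triangle hvert a x b
    have h₂ := hd.hatd_triangle hvert x y b
    rw [hd.edge_eq hab]
    linarith

theorem checkd_nonneg (hd : IsGraphPseudometric E d) (hvert : ∀ z, z ∈ Vtx E) (x y : X) :
    0 ≤ checkd E d x y :=
  le_csSup (hd.bddAbove_checkd hvert x y) (Or.inl rfl)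

theorem le_checkd (hd : IsGraphPseudometric E d) (hvert : ∀ z, z ∈ Vtx E) (x y : X) {a b : X}
    (hab : E a b) : d a b - hatd E d a x - hatd E d y b ≤ checkd E d x y :=
  le_csSup (hd.bddAbove_checkd hvert x y) (Or.inr ⟨a, b, hab, rfl⟩)

theorem checkd_le_add (hd : IsGraphPseudometric E d) (hvert : ∀ z, z ∈ Vtx E) (u v x y : X) :
    checkd E d u v ≤ hatd E d u x + checkd E d x y + hatd E d y v := by
  refine csSup_le ⟨0, Or.inl rfl⟩ ?_
  rintro s (rfl | ⟨a, b, hab, rfl⟩)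
  · have h₁ := hd.hatd_nonneg u x
    have h₂ := hd.hatd_nonneg y v
    have h₃ := hd.checkd_nonneg hvert x y
    linarith
  · have h₁ := hd.le_checkd hvert x y hab
    have h₂ := hd.hatd_triangle hvert a u x
    have h₃ := hd.hatd_triangle hvert y v b
    linarith

theorem checkd_comm_le (hd : IsGraphPseudometric E d) (hvert : ∀ z, z ∈ Vtx E) (x y : X) :
    checkd E d x y ≤ checkd E d y x := by
  refine csSup_le ⟨0, Or.inl rfl⟩ ?_
  rintro s (rfl | ⟨a, b, hab, rfl⟩)
  · exact hd.checkd_nonneg hvert y x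
  · have h := hd.le_checkd hvert y x (hd.symm hab)
    rw [hd.wt_symm hab, hd.hatd_comm_s9 hvert a x, hd.hatd_comm_s9 hvert y b]
    linarith

theorem min_le_hatd_extEdge (hd : IsGraphPseudometric E d) (hvert : ∀ z, z ∈ Vtx E) {x y : X}
    (hnE : ¬ E x y) {r : ℝ} (hr : 0 ≤ r) (u v : X) :
    min (hatd E d u v)
        (min (hatd E d u x + r + hatd E d y v) (hatd E d u y + r + hatd E d x v)) ≤
      hatd (extEdge E x y) (extWt d x y r) u v := by
  obtain ⟨t, ht⟩ := hd.walkSums_nonempty hvert u v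
  refine le_csInf
    ⟨t, walkSums_extEdge_of_mem hnE (fun h => hnE (hd.symm h)) ht⟩ fun s hs => ?_
  set f : X → ℝ := fun a => min (hatd E d a v)
    (min (hatd E d a x + r + hatd E d y v) (hatd E d a y + r + hatd E d x v))
  have key : ∀ a b, extEdge E x y a b → f a ≤ extWt d x y r a b + f b := by
    intro a b hab
    have hx := hd.hatd_self x
    have hy := hd.hatd_self y
    have hxy := hd.hatd_nonneg x y
    have hyx := hd.hatd_nonneg y x
    by_cases hn : (a = x ∧ b = y) ∨ (a = y ∧ b = x)
    · rw [extWt, if_pos hn]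
      rcases hn with ⟨rfl, rfl⟩ | ⟨rfl, rfl⟩ <;> grind
    · rw [extWt, if_neg hn]
      have hE : E a b := hab.resolve_right hn
      have h₁ := hd.hatd_le_edge_add hvert hE v
      have h₂ := hd.hatd_le_edge_add hvert hE x
      have h₃ := hd.hatd_le_edge_add hvert hE y
      grind
  have h := le_add_of_mem_walkSums key hs
  have hv : f v ≤ 0 := (min_le_left _ _).trans (hd.hatd_self v).le
  linarith

theorem hatd_extEdge_le (hd : IsGraphPseudometric E d) (hvert : ∀ z, z ∈ Vtx E) {x y : X}
    (hnE : ¬ E x y) {r : ℝ} (hr : 0 ≤ r) (u v : X) :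
    hatd (extEdge E x y) (extWt d x y r) u v ≤ hatd E d u v := by
  refine le_csInf (hd.walkSums_nonempty hvert u v) fun s hs => hatd_le_of_mem ?_
    (walkSums_extEdge_of_mem hnE (fun h => hnE (hd.symm h)) hs)
  intro a b hab
  rw [extWt]
  split_ifs with hn
  exacts [hr, hd.nonneg (hab.resolve_right hn)]

end IsGraphPseudometric

/-- With `D = d ∪ {⟨xy, r⟩}` for `ď(x,y) ≤ r ≤ d̂(x,y)`: whenever
`d̂(u,v) ≠ D̂(u,v)`, we have `D̂(u,v) − ď(u,v) ≥ r − ď(x,y)`. -/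
theorem one_step_extension_estimates₃ (E : X → X → Prop) (d : X → X → ℝ)
    (hd : IsGraphPseudometric E d) (hvert : ∀ z : X, z ∈ Vtx E)
    (x y : X) (hxy : x ≠ y) (hnE : ¬ E x y) (r : ℝ)
    (hr₁ : checkd E d x y ≤ r) (hr₂ : r ≤ hatd E d x y) :
    ∀ u v : X, hatd E d u v ≠ hatd (extEdge E x y) (extWt d x y r) u v →
      r - checkd E d x y ≤
        hatd (extEdge E x y) (extWt d x y r) u v - checkd E d u v := by
  intro u v hne
  have hr : 0 ≤ r := (hd.checkd_nonneg hvert x y).trans hr₁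
  have hlt := (hd.hatd_extEdge_le hvert hnE hr u v).lt_of_ne hne.symm
  rcases min_le_iff.mp (hd.min_le_hatd_extEdge hvert hnE hr u v) with h | h
  · exact absurd h hlt.not_ge
  rcases min_le_iff.mp h with h | h
  · have := hd.checkd_le_add hvert u v x y
    linarith
  · have h₁ := hd.checkd_le_add hvert u v y x
    have h₂ := hd.checkd_comm_le hvert y x
    linarith

end GraphMetricPaper
end
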